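/- arXiv:2003.02513 — 3 statements merged into one kernel-verified Lean document; each statement's English description precedes it below -/
import Mathlib

section
/- Fix a dataset (r_j, a_j) ∈ ℝ × ℝ^m, j = 1,…,n, with |r_j| ≤ r̄ and ‖a_j‖_∞ ≤ ā for all j, let d ∈ ℝ^m satisfy 0 < d̲ ≤ d_i ≤ d̄ for all i, and assume the data are in general position: for every p ∈ ℝ^m there are at most m indices j with r_j = a_jᵀp. Let σ be a uniformly random permutation of {1,…,n}, let R_s*(σ) denote the optimal value of the scaled LP: maximize Σ_{j=1}^s r_{σ(j)} x_j over x ∈ [0,1]^s subject to Σ_{j=1}^s a_{i,σ(j)} x_j ≤ s·d_i for i = 1,…,m, and let R_n* be the optimal value of the full LP (the case s = n, which does not depend on σ). Then for every integer s with max{16ā², e^{16ā²}, e} < s ≤ n: (1/s)·E[R_s*(σ)] ≥ (1/n)·R_n* − m·r̄/n − r̄·log s/(d̲·√s) − m·r̄/s, where the expectation is the average over all n! permutations σ. -/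
/-- Optimal value of the LP `max Σ_j r_j x_j  s.t.  Σ_j a_{ij} x_j ≤ b_i, x ∈ [0,1]ⁿ`,
as the supremum of the objective over the feasible set. -/
noncomputable def LPval (n m : ℕ) (r : Fin n → ℝ) (a : Fin n → Fin m → ℝ)
    (b : Fin m → ℝ) : ℝ :=
  sSup ((fun x : Fin n → ℝ => ∑ j, r j * x j) ''
    {x | (∀ j, 0 ≤ x j ∧ x j ≤ 1) ∧ ∀ i, ∑ j, a j i * x j ≤ b i})

theorem perm_sum_swap {α : Type*} [Fintype α] [DecidableEq α] (i k : α)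
    (F : Equiv.Perm α → ℝ) :
    ∑ σ : Equiv.Perm α, F (σ * Equiv.swap i k) = ∑ σ : Equiv.Perm α, F σ :=
  Equiv.sum_comp (Equiv.mulRight (Equiv.swap i k)) F

theorem perm_mean {α : Type*} [Fintype α] [DecidableEq α] (f : α → ℝ) (k : α) :
    (Fintype.card α : ℝ) * ∑ σ : Equiv.Perm α, f (σ k)
      = ((Fintype.card α).factorial : ℝ) * ∑ i, f i := by
  have h1 : ∀ i, ∑ σ : Equiv.Perm α, f (σ i) = ∑ σ : Equiv.Perm α, f (σ k) := by
    intro i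
    rw [← perm_sum_swap i k (fun σ => f (σ k))]
    simp
  have h2 : ∑ i, ∑ σ : Equiv.Perm α, f (σ i) = (Fintype.card α : ℝ) * ∑ σ : Equiv.Perm α, f (σ k) := by
    simp [h1]
  rw [← h2, Finset.sum_comm]
  have h3 : ∀ σ : Equiv.Perm α, ∑ i, f (σ i) = ∑ i, f i := fun σ => Equiv.sum_comp σ f
  simp [h3, Fintype.card_perm]

theorem perm_step {α : Type*} [Fintype α] [DecidableEq α] (y : α → ℝ) (hy : ∀ i, 0 < y i)
    (T : Finset α) (k : α) (hk : k ∉ T) (i : α) :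
    ∑ σ : Equiv.Perm α, (∏ j ∈ T, y (σ j)) * y (σ k)
      ≤ ∑ σ : Equiv.Perm α, (∏ j ∈ T, y (σ j)) * y (σ i) := by
  have hswap : ∀ (U : Finset α) (σ : Equiv.Perm α), i ∉ U → k ∉ U →
      ∏ j ∈ U, y ((σ * Equiv.swap i k) j) = ∏ j ∈ U, y (σ j) := by
    intro U σ hi hk
    refine Finset.prod_congr rfl fun j hj => ?_
    have h1 : j ≠ i := fun h => hi (h ▸ hj)
    have h2 : j ≠ k := fun h => hk (h ▸ hj)
    simp [Equiv.swap_apply_of_ne_of_ne h1 h2]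
  by_cases hi : i ∈ T
  · set Q : Equiv.Perm α → ℝ := fun σ => ∏ j ∈ T.erase i, y (σ j) with hQ
    have hP : ∀ σ : Equiv.Perm α, ∏ j ∈ T, y (σ j) = y (σ i) * Q σ := fun σ =>
      (Finset.mul_prod_erase T (fun j => y (σ j)) hi).symm
    have hQ0 : ∀ σ, 0 < Q σ := fun σ => Finset.prod_pos fun j _ => hy _
    have hs : ∑ σ : Equiv.Perm α, Q σ * y (σ k) ^ 2 = ∑ σ : Equiv.Perm α, Q σ * y (σ i) ^ 2 := by
      rw [← perm_sum_swap i k (fun σ => Q σ * y (σ i) ^ 2)]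
      refine Finset.sum_congr rfl fun σ _ => ?_
      have : Q (σ * Equiv.swap i k) = Q σ :=
        hswap _ σ (by simp) (by simp [hk])
      simp [this]
    have h2 : ∑ σ : Equiv.Perm α, (2 * (y (σ i) * Q σ * y (σ k)))
        ≤ ∑ σ : Equiv.Perm α, (Q σ * y (σ k) ^ 2 + Q σ * y (σ i) ^ 2) := by
      refine Finset.sum_le_sum fun σ _ => ?_
      nlinarith [mul_nonneg (hQ0 σ).le (sq_nonneg (y (σ i) - y (σ k)))]
    rw [Finset.sum_add_distrib, hs, ← Finset.mul_sum] at h2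
    simp only [hP]
    have h3 : ∑ σ : Equiv.Perm α, y (σ i) * Q σ * y (σ i) = ∑ σ : Equiv.Perm α, Q σ * y (σ i) ^ 2 :=
      Finset.sum_congr rfl fun σ _ => by ring
    linarith
  · rw [← perm_sum_swap i k (fun σ => (∏ j ∈ T, y (σ j)) * y (σ k))]
    refine le_of_eq (Finset.sum_congr rfl fun σ _ => ?_)
    simp only [hswap T σ hi hk]
    simp

/-- Sampling without replacement is dominated by sampling with replacement (Maclaurin). -/
theorem perm_prod {α : Type*} [Fintype α] [DecidableEq α] [Nonempty α] (y : α → ℝ)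
    (hy : ∀ i, 0 < y i) (T : Finset α) :
    ∑ σ : Equiv.Perm α, ∏ j ∈ T, y (σ j)
      ≤ ((Fintype.card α).factorial : ℝ) * ((∑ i, y i) / (Fintype.card α : ℝ)) ^ T.card := by
  have hn : (0 : ℝ) < Fintype.card α := by exact_mod_cast Fintype.card_pos
  induction T using Finset.induction_on with
  | empty => simp [Fintype.card_perm]
  | insert k T hk ih =>
    have h1 : ∑ i, ∑ σ : Equiv.Perm α, (∏ j ∈ T, y (σ j)) * y (σ k)
        ≤ ∑ i, ∑ σ : Equiv.Perm α, (∏ j ∈ T, y (σ j)) * y (σ i) :=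
      Finset.sum_le_sum fun i _ => perm_step y hy T k hk i
    have h3 : ∀ σ : Equiv.Perm α, ∑ i, y (σ i) = ∑ i, y i := fun σ => Equiv.sum_comp σ y
    rw [Finset.sum_comm (s := Finset.univ) (t := Finset.univ)
      (f := fun i (σ : Equiv.Perm α) => (∏ j ∈ T, y (σ j)) * y (σ i))] at h1
    simp only [← Finset.mul_sum, h3, ← Finset.sum_mul] at h1
    rw [Finset.sum_const, Finset.card_univ, nsmul_eq_mul] at h1
    have h4 : ∀ σ : Equiv.Perm α, ∏ j ∈ insert k T, y (σ j) = (∏ j ∈ T, y (σ j)) * y (σ k) := by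
      intro σ
      rw [Finset.prod_insert hk, mul_comm]
    simp only [h4]
    rw [Finset.card_insert_of_notMem hk, pow_succ, ← mul_assoc]
    have hY : 0 ≤ (∑ i, y i) / (Fintype.card α : ℝ) :=
      div_nonneg (Finset.sum_nonneg fun i _ => (hy i).le) hn.le
    refine le_trans ?_ (mul_le_mul_of_nonneg_right ih hY)
    rw [← mul_div_assoc, le_div_iff₀ hn]
    linarith

/-- Hoeffding-type bound on the mean of exponentials. -/
theorem mean_exp {α : Type*} [Fintype α] [Nonempty α] (c : α → ℝ) (A D l : ℝ)
    (hc : ∀ j, |c j| ≤ A) (hl : 0 ≤ l) (hD : ∑ j, c j ≤ Fintype.card α * D) :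
    (∑ j, Real.exp (l * (c j - D))) / (Fintype.card α : ℝ) ≤ Real.exp (2 * l ^ 2 * A ^ 2) := by
  have hn : (0 : ℝ) < Fintype.card α := by exact_mod_cast Fintype.card_pos
  set N : ℝ := ((Fintype.card α : ℕ) : ℝ) with hN
  have hJ : N ≤ ∑ j, Real.exp (l * (D - c j)) := by
    have : ∑ j, (1 + l * (D - c j)) ≤ ∑ j, Real.exp (l * (D - c j)) :=
      Finset.sum_le_sum fun j _ => by
        have := Real.add_one_le_exp (l * (D - c j)); linarith
    rw [Finset.sum_add_distrib, ← Finset.mul_sum, Finset.sum_sub_distrib] at this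
    simp only [Finset.sum_const, Finset.card_univ, nsmul_eq_mul, mul_one] at this
    nlinarith [mul_nonneg hl (sub_nonneg.2 hD)]
  have hpair : (∑ i, Real.exp (l * (c i - D))) * (∑ j, Real.exp (l * (D - c j)))
      = ∑ i, ∑ j, Real.exp (l * (c i - c j)) := by
    rw [Finset.sum_mul_sum]
    refine Finset.sum_congr rfl fun i _ => Finset.sum_congr rfl fun j _ => ?_
    rw [← Real.exp_add]; congr 1; ring
  have hsym : 2 * ∑ i, ∑ j, Real.exp (l * (c i - c j))
      = ∑ i, ∑ j, 2 * Real.cosh (l * (c i - c j)) := by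
    have : ∑ i, ∑ j, Real.exp (l * (c i - c j)) = ∑ i, ∑ j, Real.exp (-(l * (c i - c j))) := by
      rw [Finset.sum_comm]
      refine Finset.sum_congr rfl fun i _ => Finset.sum_congr rfl fun j _ => ?_
      congr 1; ring
    rw [two_mul]
    nth_rewrite 2 [this]
    rw [← Finset.sum_add_distrib]
    refine Finset.sum_congr rfl fun i _ => ?_
    rw [← Finset.sum_add_distrib]
    refine Finset.sum_congr rfl fun j _ => ?_
    rw [Real.cosh_eq]; ring
  have hb : ∑ i, ∑ j, 2 * Real.cosh (l * (c i - c j))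
      ≤ ∑ i : α, ∑ j : α, 2 * Real.exp (2 * l ^ 2 * A ^ 2) := by
    refine Finset.sum_le_sum fun i _ => Finset.sum_le_sum fun j _ => ?_
    have h1 := Real.cosh_le_exp_half_sq (l * (c i - c j))
    have h2 : (l * (c i - c j)) ^ 2 / 2 ≤ 2 * l ^ 2 * A ^ 2 := by
      have h3 : (c i - c j) ^ 2 ≤ (2 * A) ^ 2 := by
        obtain ⟨p1, p2⟩ := abs_le.1 (hc i)
        obtain ⟨q1, q2⟩ := abs_le.1 (hc j)
        exact sq_le_sq' (by linarith) (by linarith)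
      nlinarith [mul_le_mul_of_nonneg_left h3 (sq_nonneg l)]
    have := Real.exp_le_exp.2 h2
    linarith
  simp only [Finset.sum_const, Finset.card_univ, nsmul_eq_mul, ← hN] at hb
  have hX : 0 ≤ ∑ i, Real.exp (l * (c i - D)) := Finset.sum_nonneg fun i _ => (Real.exp_pos _).le
  have h5 := mul_le_mul_of_nonneg_left hJ hX
  rw [hpair] at h5
  rw [div_le_iff₀ hn]
  have h6 : (∑ i, Real.exp (l * (c i - D))) * N ≤ (Real.exp (2 * l ^ 2 * A ^ 2) * N) * N := by
    linarith
  exact le_of_mul_le_mul_right h6 hn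

/-- Tail bound for sampling without replacement. -/
theorem tail_bound {α : Type*} [Fintype α] [DecidableEq α] [Nonempty α] (c : α → ℝ) (A D : ℝ)
    (hc : ∀ j, |c j| ≤ A) (hD : ∑ j, c j ≤ Fintype.card α * D) (T : Finset α) (s : ℕ)
    (hT : T.card = s) (hs : 0 < s) (hA : 16 * A ^ 2 ≤ Real.log s) :
    (((Finset.univ.filter fun σ : Equiv.Perm α =>
        s * D + Real.sqrt s * Real.log s < ∑ j ∈ T, c (σ j)).card : ℕ) : ℝ)
      ≤ ((Fintype.card α).factorial : ℝ) / s := by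
  have hs0 : (0 : ℝ) < s := by exact_mod_cast hs
  set L := Real.log s with hL
  set q := Real.sqrt s with hq
  have hq0 : 0 < q := Real.sqrt_pos.2 hs0
  have hqq : q ^ 2 = s := Real.sq_sqrt hs0.le
  set l : ℝ := 2 / q with hl
  have hl0 : 0 < l := by positivity
  have hlq : l * q = 2 := by rw [hl]; field_simp
  set B := Finset.univ.filter fun σ : Equiv.Perm α => s * D + q * L < ∑ j ∈ T, c (σ j)
  have h1 := perm_prod (fun j => Real.exp (l * (c j - D))) (fun _ => Real.exp_pos _) T
  have h2 := mean_exp c A D l hc hl0.le hD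
  have h0 : 0 ≤ (∑ j, Real.exp (l * (c j - D))) / (Fintype.card α : ℝ) := by positivity
  have h3 := pow_le_pow_left₀ h0 h2 T.card
  rw [← Real.exp_nat_mul, hT] at h3
  rw [hT] at h1
  have h4 : Real.exp (s * (2 * l ^ 2 * A ^ 2)) ≤ Real.exp L := by
    apply Real.exp_le_exp.2
    have : (s : ℝ) * (2 * l ^ 2 * A ^ 2) = 8 * A ^ 2 := by
      rw [← hqq]
      calc q ^ 2 * (2 * l ^ 2 * A ^ 2) = 2 * (l * q) ^ 2 * A ^ 2 := by ring
        _ = _ := by rw [hlq]; ring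
    rw [this]; nlinarith [sq_nonneg A]
  have h5 : ∑ σ ∈ B, Real.exp (2 * L) ≤ ∑ σ : Equiv.Perm α, ∏ j ∈ T, Real.exp (l * (c (σ j) - D)) := by
    refine le_trans ?_ (Finset.sum_le_sum_of_subset_of_nonneg (Finset.subset_univ B)
      (fun σ _ _ => Finset.prod_nonneg fun j _ => (Real.exp_pos _).le))
    refine Finset.sum_le_sum fun σ hσ => ?_
    rw [← Real.exp_sum]
    apply Real.exp_le_exp.2
    rw [← Finset.mul_sum, Finset.sum_sub_distrib]
    simp only [Finset.sum_const, hT, nsmul_eq_mul]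
    have := (Finset.mem_filter.1 hσ).2
    calc 2 * L = l * (q * L) := by rw [← mul_assoc, hlq]
      _ ≤ _ := mul_le_mul_of_nonneg_left (by linarith) hl0.le
  rw [Finset.sum_const, nsmul_eq_mul] at h5
  have hexp : Real.exp L = s := Real.exp_log hs0
  have h6 : Real.exp (2 * L) = s * s := by rw [two_mul, Real.exp_add, hexp]
  rw [h6] at h5
  rw [hexp] at h4
  have h7 : (B.card : ℝ) * (s * s) ≤ ((Fintype.card α).factorial : ℝ) * s :=
    h5.trans (h1.trans (mul_le_mul_of_nonneg_left (h3.trans h4) (by positivity)))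
  rw [le_div_iff₀ hs0]
  rw [← mul_assoc] at h7
  exact le_of_mul_le_mul_right h7 hs0

theorem LPval_ge (n m : ℕ) (r : Fin n → ℝ) (a : Fin n → Fin m → ℝ) (b : Fin m → ℝ) (R : ℝ)
    (hr : ∀ j, |r j| ≤ R) (x : Fin n → ℝ) (hx : ∀ j, 0 ≤ x j ∧ x j ≤ 1)
    (hb : ∀ i, ∑ j, a j i * x j ≤ b i) : ∑ j, r j * x j ≤ LPval n m r a b := by
  refine le_csSup ⟨∑ _j : Fin n, R, ?_⟩ ⟨x, ⟨hx, hb⟩, rfl⟩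
  rintro _ ⟨z, ⟨hz, _⟩, rfl⟩
  refine Finset.sum_le_sum fun j _ => ?_
  have := abs_le.1 (hr j)
  nlinarith [hz j, abs_nonneg (r j), hr j, le_abs_self (r j)]

/-- Pointwise bound for one sample. -/
theorem pointwise (s m : ℕ) (hs : 0 < s) (r : Fin s → ℝ) (a : Fin s → Fin m → ℝ) (d : Fin m → ℝ)
    (R dlb t : ℝ) (hR : 0 ≤ R) (hdlb : 0 < dlb) (ht : 0 ≤ t)
    (hr : ∀ j, |r j| ≤ R) (hd : ∀ i, dlb ≤ d i) (x : Fin s → ℝ) (hx : ∀ j, 0 ≤ x j ∧ x j ≤ 1) :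
    ∑ j, r j * x j - R * t / dlb
      - s * R * ∑ i, (if s * d i + t < ∑ j, a j i * x j then (1 : ℝ) else 0)
      ≤ LPval s m r a (fun i => (s : ℝ) * d i) := by
  have hs0 : (0 : ℝ) < s := by exact_mod_cast hs
  have hup : ∑ j, r j * x j ≤ s * R := by
    have : ∑ j, r j * x j ≤ ∑ _j : Fin s, R := by
      refine Finset.sum_le_sum fun j _ => ?_
      nlinarith [hx j, abs_nonneg (r j), hr j, le_abs_self (r j)]
    simpa using this
  have hsR : 0 ≤ s * R := by positivity
  have hRt : 0 ≤ R * t / dlb := by positivity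
  by_cases hbad : ∃ i, s * d i + t < ∑ j, a j i * x j
  · obtain ⟨i0, hi0⟩ := hbad
    have h1 : (1 : ℝ) ≤ ∑ i, (if s * d i + t < ∑ j, a j i * x j then (1 : ℝ) else 0) := by
      have := Finset.single_le_sum (s := Finset.univ)
        (f := fun i => (if s * d i + t < ∑ j, a j i * x j then (1 : ℝ) else 0))
        (fun i _ => by split_ifs <;> norm_num) (Finset.mem_univ i0)
      simpa [hi0] using this
    have h0 : (0 : ℝ) ≤ LPval s m r a (fun i => (s : ℝ) * d i) := by
      have := LPval_ge s m r a (fun i => (s : ℝ) * d i) R hr (fun _ => 0) (by simp)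
        (fun i => by
          have := hd i
          simp only [mul_zero, Finset.sum_const_zero]
          have : 0 ≤ d i := by linarith
          positivity)
      simpa using this
    nlinarith [mul_le_mul_of_nonneg_left h1 hsR]
  · push Not at hbad
    have hsum : (0 : ℝ) ≤ ∑ i, (if s * d i + t < ∑ j, a j i * x j then (1 : ℝ) else 0) :=
      Finset.sum_nonneg fun i _ => by split_ifs <;> norm_num
    set θ : ℝ := s * dlb / (s * dlb + t) with hθ
    have hden : 0 < s * dlb + t := by positivity
    have hθ0 : 0 ≤ θ := by positivity
    have hθ1 : θ ≤ 1 := by rw [hθ, div_le_one hden]; linarith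
    have hθd : θ * (s * dlb + t) = s * dlb := by rw [hθ]; field_simp
    have hθt : (1 - θ) * (s * dlb) ≤ t := by nlinarith
    have h1 := LPval_ge s m r a (fun i => (s : ℝ) * d i) R hr (fun j => θ * x j)
      (fun j => ⟨mul_nonneg hθ0 (hx j).1, by nlinarith [hx j]⟩)
      (fun i => by
        have e : ∑ j, a j i * (θ * x j) = θ * ∑ j, a j i * x j := by
          rw [Finset.mul_sum]; exact Finset.sum_congr rfl fun j _ => by ring
        rw [e]
        have h2 := mul_le_mul_of_nonneg_left (hbad i) hθ0
        have h3 : 0 ≤ s * (d i - dlb) := mul_nonneg hs0.le (by linarith [hd i])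
        nlinarith)
    have e : ∑ j, r j * (θ * x j) = θ * ∑ j, r j * x j := by
      rw [Finset.mul_sum]; exact Finset.sum_congr rfl fun j _ => by ring
    rw [e] at h1
    have h4 : (1 - θ) * (s * R) ≤ R * t / dlb := by
      rw [le_div_iff₀ hdlb]
      nlinarith [mul_le_mul_of_nonneg_left hθt hR]
    have h5 : (1 - θ) * ∑ j, r j * x j ≤ (1 - θ) * (s * R) :=
      mul_le_mul_of_nonneg_left hup (by linarith)
    nlinarith [mul_nonneg hsR hsum]

/-- (Proposition 1 of the paper.) Under the random permutation model
with data in general position, for `max{16ā², e^{16ā²}, e} < s ≤ n`, the expected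
optimal value of the prefix (scaled) LP of size `s` satisfies
`(1/s) E[R_s*(σ)] ≥ (1/n) R_n* − m r̄/n − r̄ log s/(d̲ √s) − m r̄/s`, the expectation
being the average over all `n!` permutations. -/
theorem stmt8 (m n : ℕ) (hm : 0 < m) (hn : 0 < n)
    (r : Fin n → ℝ) (a : Fin n → Fin m → ℝ) (d : Fin m → ℝ)
    (rbar abar dlb dbar : ℝ) (hdlb : 0 < dlb)
    (hr : ∀ j, |r j| ≤ rbar) (ha : ∀ j i, |a j i| ≤ abar)
    (hd : ∀ i, dlb ≤ d i ∧ d i ≤ dbar)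
    (hgen : ∀ p : Fin m → ℝ, {j | r j = ∑ i, a j i * p i}.ncard ≤ m)
    (s : ℕ) (hs : s ≤ n)
    (hslb : max (max (16 * abar ^ 2) (Real.exp (16 * abar ^ 2))) (Real.exp 1) < s) :
    (1 / (n : ℝ)) * LPval n m r a (fun i => (n : ℝ) * d i)
        - m * rbar / n - rbar * Real.log s / (dlb * Real.sqrt s) - m * rbar / s
      ≤ (1 / (s : ℝ)) *
          ((∑ σ : Equiv.Perm (Fin n),
              LPval s m (fun j => r (σ (Fin.castLE hs j)))
                (fun j i => a (σ (Fin.castLE hs j)) i) (fun i => (s : ℝ) * d i)) /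
            (Nat.factorial n : ℝ)) := by
  have hsE : Real.exp 1 < s := lt_of_le_of_lt (le_max_right _ _) hslb
  have hsA : Real.exp (16 * abar ^ 2) < s :=
    lt_of_le_of_lt ((le_max_right _ _).trans (le_max_left _ _)) hslb
  have hs0 : (0 : ℝ) < s := (Real.exp_pos 1).trans hsE
  have hsN : 0 < s := by exact_mod_cast hs0
  have hn0 : (0 : ℝ) < n := by exact_mod_cast hn
  have hA : 16 * abar ^ 2 ≤ Real.log s := (Real.le_log_iff_exp_le hs0).2 hsA.le
  have hL0 : 0 ≤ Real.log s := le_trans (by positivity) hA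
  have : Nonempty (Fin n) := ⟨⟨0, hn⟩⟩
  have hR : 0 ≤ rbar := (abs_nonneg _).trans (hr ⟨0, hn⟩)
  have hq0 : 0 < Real.sqrt s := Real.sqrt_pos.2 hs0
  have hqq : Real.sqrt s * Real.sqrt s = s := Real.mul_self_sqrt hs0.le
  have hF : (0 : ℝ) < (Nat.factorial n : ℝ) := by exact_mod_cast Nat.factorial_pos n
  set V : Equiv.Perm (Fin n) → ℝ := fun σ => LPval s m (fun j => r (σ (Fin.castLE hs j)))
                (fun j i => a (σ (Fin.castLE hs j)) i) (fun i => (s : ℝ) * d i) with hV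
  set t := Real.sqrt s * Real.log s with ht
  have ht0 : 0 ≤ t := by positivity
  set T : Finset (Fin n) := Finset.univ.map (Fin.castLEEmb hs) with hTdef
  have hT : T.card = s := by simp [hTdef]
  have hTsum : ∀ f : Fin n → ℝ, ∑ j ∈ T, f j = ∑ j : Fin s, f (Fin.castLE hs j) := by
    intro f; simp [hTdef]
  -- the key bound for every feasible point
  have key : ∀ x : Fin n → ℝ, (∀ j, 0 ≤ x j ∧ x j ≤ 1) →
      (∀ i, ∑ j, a j i * x j ≤ (n : ℝ) * d i) →
      (Nat.factorial n : ℝ) * (s * ((∑ j, r j * x j) / n) - rbar * t / dlb - m * rbar)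
        ≤ ∑ σ, V σ := by
    intro x hx hb
    have hpt : ∀ σ : Equiv.Perm (Fin n),
        (∑ j ∈ T, r (σ j) * x (σ j)) - rbar * t / dlb
          - s * rbar * ∑ i, (if s * d i + t < ∑ j ∈ T, a (σ j) i * x (σ j) then (1 : ℝ) else 0)
        ≤ V σ := by
      intro σ
      have := pointwise s m hsN (fun j => r (σ (Fin.castLE hs j)))
        (fun j i => a (σ (Fin.castLE hs j)) i) d rbar dlb t hR hdlb ht0 (fun j => hr _)
        (fun i => (hd i).1) (fun j => x (σ (Fin.castLE hs j))) (fun j => hx _)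
      simp only [hTsum]
      exact this
    have hsum := Finset.sum_le_sum (s := Finset.univ) fun σ _ => hpt σ
    rw [Finset.sum_sub_distrib, Finset.sum_sub_distrib, ← Finset.mul_sum] at hsum
    have hmean : ∑ σ : Equiv.Perm (Fin n), ∑ j ∈ T, r (σ j) * x (σ j)
        = (Nat.factorial n : ℝ) * (s * ((∑ j, r j * x j) / n)) := by
      rw [Finset.sum_comm]
      have h1 : ∀ k : Fin n, ∑ σ : Equiv.Perm (Fin n), r (σ k) * x (σ k)
          = (Nat.factorial n : ℝ) * ((∑ j, r j * x j) / n) := by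
        intro k
        have := perm_mean (fun j => r j * x j) k
        rw [Fintype.card_fin] at this
        field_simp
        linarith
      rw [Finset.sum_congr rfl fun k _ => h1 k, Finset.sum_const, hT, nsmul_eq_mul]
      ring
    have htail : ∑ σ : Equiv.Perm (Fin n), ∑ i,
        (if s * d i + t < ∑ j ∈ T, a (σ j) i * x (σ j) then (1 : ℝ) else 0)
        ≤ m * ((Nat.factorial n : ℝ) / s) := by
      rw [Finset.sum_comm]
      have h1 : ∀ i : Fin m, ∑ σ : Equiv.Perm (Fin n),
          (if s * d i + t < ∑ j ∈ T, a (σ j) i * x (σ j) then (1 : ℝ) else 0)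
          ≤ (Nat.factorial n : ℝ) / s := by
        intro i
        rw [Finset.sum_boole]
        have := tail_bound (fun j => a j i * x j) abar (d i) (fun j => by
          rw [abs_mul, abs_of_nonneg (hx j).1]
          nlinarith [ha j i, abs_nonneg (a j i), hx j]) (by simpa using hb i) T s hT hsN hA
        rw [Fintype.card_fin] at this
        exact this
      refine (Finset.sum_le_sum fun i _ => h1 i).trans ?_
      simp
    have htail2 := mul_le_mul_of_nonneg_left htail (mul_nonneg hs0.le hR)
    have e : s * rbar * (m * ((Nat.factorial n : ℝ) / s)) = (Nat.factorial n : ℝ) * (m * rbar) := by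
      field_simp
    rw [e] at htail2
    rw [hmean, Finset.sum_const, Finset.card_univ, Fintype.card_perm, Fintype.card_fin,
      nsmul_eq_mul] at hsum
    nlinarith
  have hfull : LPval n m r a (fun i => (n : ℝ) * d i)
      ≤ n * (((∑ σ, V σ) / (Nat.factorial n : ℝ) + rbar * t / dlb + m * rbar) / s) := by
    refine csSup_le ⟨_, (fun _ => 0), ⟨by simp, fun i => ?_⟩, rfl⟩ ?_
    · have : 0 ≤ d i := by linarith [(hd i).1]
      simp only [mul_zero, Finset.sum_const_zero]
      positivity
    · rintro _ ⟨x, ⟨hx, hb⟩, rfl⟩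
      have h1 := key x hx hb
      rw [mul_comm, ← le_div_iff₀ hF] at h1
      have h2 : (∑ j, r j * x j) / n
          ≤ (((∑ σ, V σ) / (Nat.factorial n : ℝ) + rbar * t / dlb + m * rbar) / s) := by
        rw [le_div_iff₀ hs0]; linarith
      rw [div_le_iff₀ hn0] at h2
      linarith
  have h1 : 1 / (n : ℝ) * LPval n m r a (fun i => (n : ℝ) * d i)
      ≤ ((∑ σ, V σ) / (Nat.factorial n : ℝ) + rbar * t / dlb + m * rbar) / s := by
    rw [one_div, inv_mul_le_iff₀ hn0]; exact hfull
  have h2 : rbar * t / dlb / s = rbar * Real.log s / (dlb * Real.sqrt s) := by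
    rw [ht, div_div, div_eq_div_iff (by positivity) (by positivity)]
    linear_combination (rbar * Real.log s * dlb) * hqq
  have h3 : 0 ≤ m * rbar / n := by positivity
  rw [add_div, add_div, h2] at h1
  rw [one_div (s : ℝ), inv_mul_eq_div]
  linarith
end

section
/- Fix a dataset (r_j, a_j) ∈ ℝ × ℝ^m, j = 1,…,n, with |r_j| ≤ r̄ and ‖a_j‖_∞ ≤ ā for all j, and let σ be a uniformly random permutation of {1,…,n}. Then for every t with 1 ≤ t ≤ n − 1, writing μ = min{t, n − t}: (1) E[ sup_{p ≥ 0} | (1/(n−t))·Σ_{j=t+1}^n r_{σ(j)}·1{r_{σ(j)} > a_{σ(j)}ᵀp} − (1/t)·Σ_{j=1}^t r_{σ(j)}·1{r_{σ(j)} > a_{σ(j)}ᵀp} | ] ≤ 4r̄/√μ + 2·√(2 r̄² m log n)/√μ; and (2) for every i = 1,…,m: E[ sup_{p ≥ 0} | (1/(n−t))·Σ_{j=t+1}^n a_{i,σ(j)}·1{r_{σ(j)} > a_{σ(j)}ᵀp} − (1/t)·Σ_{j=1}^t a_{i,σ(j)}·1{r_{σ(j)} > a_{σ(j)}ᵀp}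 | ] ≤ 4ā/√μ + 2·√(2 ā² m log n)/√μ. Expectations are averages over all n! permutations. -/
section Helpers

variable {α β : Type*} [Fintype α] [DecidableEq α] [Fintype β] [DecidableEq β]

lemma sum_precomp (h : Equiv.Perm α) (Φ : (α ≃ β) → ℝ) :
    ∑ e : α ≃ β, Φ (h.trans e) = ∑ e : α ≃ β, Φ e := by
  refine Fintype.sum_equiv (Equiv.equivCongr h.symm (Equiv.refl β)) _ _ ?_
  intro e
  congr 1

lemma sym_mgf {ι : Type*} [DecidableEq ι] (x y : ι → α) (hx : Function.Injective x)
    (hy : Function.Injective y) (hxy : ∀ i j, x i ≠ y j) (v : β → ℝ) (R : ℝ)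
    (hv : ∀ b, |v b| ≤ R) (c : ℝ) (A : Finset ι) :
    ∑ e : α ≃ β, Real.exp (∑ i ∈ A, c * (v (e (y i)) - v (e (x i)))) ≤
      (Fintype.card (α ≃ β)) * Real.exp (A.card * (2 * c ^ 2 * R ^ 2)) := by
  induction A using Finset.induction_on with
  | empty => simp
  | insert i A hi ih =>
    have h1 := sum_precomp (β := β) (Equiv.swap (x i) (y i))
      (fun e => Real.exp (∑ i ∈ insert i A, c * (v (e (y i)) - v (e (x i)))))
    have h2 : ∀ e : α ≃ β, (∑ k ∈ insert i A, c * (v (((Equiv.swap (x i) (y i)).trans e) (y k)) -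
        v (((Equiv.swap (x i) (y i)).trans e) (x k)))) =
        -(c * (v (e (y i)) - v (e (x i)))) + ∑ k ∈ A, c * (v (e (y k)) - v (e (x k))) := by
      intro e
      rw [Finset.sum_insert hi]
      congr 1
      · simp; ring
      · refine Finset.sum_congr rfl ?_
        intro k hk
        have hki : k ≠ i := fun h => hi (h ▸ hk)
        simp only [Equiv.trans_apply]
        rw [Equiv.swap_apply_of_ne_of_ne (hxy i k).symm (fun h => hki (hy h)),
          Equiv.swap_apply_of_ne_of_ne (fun h => hki (hx h)) (hxy k i)]
    simp only [h2] at h1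
    have h3 : ∀ e : α ≃ β, Real.exp (-(c * (v (e (y i)) - v (e (x i)))) +
          ∑ k ∈ A, c * (v (e (y k)) - v (e (x k)))) +
        Real.exp (∑ k ∈ insert i A, c * (v (e (y k)) - v (e (x k)))) ≤
        2 * (Real.exp (2 * c ^ 2 * R ^ 2) * Real.exp (∑ k ∈ A, c * (v (e (y k)) - v (e (x k))))) := by
      intro e
      rw [Finset.sum_insert hi, Real.exp_add, Real.exp_add, ← add_mul, ← mul_assoc]
      refine mul_le_mul_of_nonneg_right ?_ (Real.exp_pos _).le
      set d := v (e (y i)) - v (e (x i)) with hd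
      have hc := Real.cosh_le_exp_half_sq (c * d)
      rw [Real.cosh_eq] at hc
      have hd2 : |d| ≤ 2 * R := by
        have := abs_sub (v (e (y i))) (v (e (x i)))
        have h1 := hv (e (y i)); have h2 := hv (e (x i))
        linarith
      have hd3 : d ^ 2 ≤ (2 * R) ^ 2 := sq_le_sq' (by linarith [(abs_le.1 hd2).1]) (abs_le.1 hd2).2
      have h5 : Real.exp ((c * d) ^ 2 / 2) ≤ Real.exp (2 * c ^ 2 * R ^ 2) := by
        apply Real.exp_le_exp.2
        nlinarith [mul_le_mul_of_nonneg_left hd3 (sq_nonneg c)]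
      linarith
    have h4 := Finset.sum_le_sum (fun e (_ : e ∈ (Finset.univ : Finset (α ≃ β))) => h3 e)
    rw [Finset.sum_add_distrib, h1, ← Finset.mul_sum, ← Finset.mul_sum] at h4
    have h6 : Real.exp (((insert i A).card : ℝ) * (2 * c ^ 2 * R ^ 2)) =
        Real.exp (2 * c ^ 2 * R ^ 2) * Real.exp (A.card * (2 * c ^ 2 * R ^ 2)) := by
      rw [← Real.exp_add, Finset.card_insert_of_notMem hi]; push_cast; ring_nf
    rw [h6]
    have h7 := mul_le_mul_of_nonneg_left ih (Real.exp_pos (2 * c ^ 2 * R ^ 2)).le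
    linarith

lemma mgf_le (t s : ℕ) (ht : 1 ≤ t) (hts : t ≤ s) (v : β → ℝ) (R : ℝ)
    (hv : ∀ b, |v b| ≤ R) (l : ℝ) :
    ∑ e : (Fin t ⊕ Fin s) ≃ β, Real.exp (l * ((1 / (s : ℝ)) * ∑ j, v (e (Sum.inr j)) -
        (1 / (t : ℝ)) * ∑ j, v (e (Sum.inl j)))) ≤
      (Fintype.card ((Fin t ⊕ Fin s) ≃ β)) * Real.exp (2 * l ^ 2 * R ^ 2 / t) := by
  have : NeZero s := ⟨by omega⟩
  have ht0 : (0 : ℝ) < t := by exact_mod_cast ht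
  have hs0 : (0 : ℝ) < s := by exact_mod_cast (by omega : 0 < s)
  have key := sym_mgf (α := Fin t ⊕ Fin s) (fun j : Fin t => Sum.inl j)
    (fun j : Fin t => Sum.inr (Fin.castLE hts j)) (fun _ _ h => Sum.inl_injective h)
    (fun _ _ h => Fin.castLE_injective hts (Sum.inr_injective h)) (fun _ _ => Sum.inl_ne_inr)
    v R hv (l / t) Finset.univ
  have e1 : ((Finset.univ : Finset (Fin t)).card : ℝ) * (2 * (l / t) ^ 2 * R ^ 2) =
      2 * l ^ 2 * R ^ 2 / t := by
    simp; field_simp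
  rw [e1] at key
  refine le_trans ?_ key
  set G : ((Fin t ⊕ Fin s) ≃ β) → ℝ := fun e =>
    ∑ i : Fin t, l / t * (v (e (Sum.inr (Fin.castLE hts i))) - v (e (Sum.inl i))) with hG
  let H : Fin s → Equiv.Perm (Fin t ⊕ Fin s) := fun k =>
    Equiv.sumCongr (Equiv.refl _) (Equiv.addRight k)
  have hF : ∀ e : (Fin t ⊕ Fin s) ≃ β, l * ((1 / (s : ℝ)) * ∑ j, v (e (Sum.inr j)) -
        (1 / (t : ℝ)) * ∑ j, v (e (Sum.inl j))) = ∑ k : Fin s, (1 / (s : ℝ)) * G ((H k).trans e) := by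
    intro e
    simp only [hG, H, Equiv.trans_apply, Equiv.sumCongr_apply, Sum.map_inr, Sum.map_inl,
      Equiv.refl_apply, Equiv.coe_addRight]
    rw [← Finset.mul_sum, Finset.sum_comm]
    have : ∀ i : Fin t, ∑ k : Fin s, l / t * (v (e (Sum.inr (Fin.castLE hts i + k))) -
        v (e (Sum.inl i))) = l / t * (∑ j, v (e (Sum.inr j)) - s * v (e (Sum.inl i))) := by
      intro i
      rw [← Finset.mul_sum, Finset.sum_sub_distrib]
      rw [← Equiv.sum_comp (Equiv.addLeft (Fin.castLE hts i)) (fun j => v (e (Sum.inr j)))]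
      simp
    rw [Finset.sum_congr rfl (fun i _ => this i), ← Finset.mul_sum, Finset.sum_sub_distrib,
      ← Finset.mul_sum]
    simp
    field_simp
  have hJ : ∀ e : (Fin t ⊕ Fin s) ≃ β, Real.exp (l * ((1 / (s : ℝ)) * ∑ j, v (e (Sum.inr j)) -
        (1 / (t : ℝ)) * ∑ j, v (e (Sum.inl j)))) ≤
        ∑ k : Fin s, (1 / (s : ℝ)) * Real.exp (G ((H k).trans e)) := by
    intro e
    rw [hF]
    have := convexOn_exp.map_sum_le (t := (Finset.univ : Finset (Fin s)))
      (w := fun _ => 1 / (s : ℝ)) (p := fun k => G ((H k).trans e)) (fun _ _ => by positivity)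
      (by simp [hs0.ne']) (fun _ _ => Set.mem_univ _)
    simpa only [smul_eq_mul] using this
  refine (Finset.sum_le_sum (fun e _ => hJ e)).trans ?_
  rw [Finset.sum_comm]
  have : ∀ k : Fin s, ∑ e : (Fin t ⊕ Fin s) ≃ β, (1 / (s : ℝ)) * Real.exp (G ((H k).trans e)) =
      (1 / (s : ℝ)) * ∑ e : (Fin t ⊕ Fin s) ≃ β, Real.exp (G e) := by
    intro k
    rw [← Finset.mul_sum, sum_precomp (H k) (fun e => Real.exp (G e))]
  rw [Finset.sum_congr rfl (fun k _ => this k)]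
  simp [hs0.ne', hG]

lemma mgf_le_min (t s : ℕ) (ht : 1 ≤ t) (hs : 1 ≤ s) (v : β → ℝ) (R : ℝ)
    (hv : ∀ b, |v b| ≤ R) (l : ℝ) :
    ∑ e : (Fin t ⊕ Fin s) ≃ β, Real.exp (l * ((1 / (s : ℝ)) * ∑ j, v (e (Sum.inr j)) -
        (1 / (t : ℝ)) * ∑ j, v (e (Sum.inl j)))) ≤
      (Fintype.card ((Fin t ⊕ Fin s) ≃ β)) * Real.exp (2 * l ^ 2 * R ^ 2 / min (t : ℝ) s) := by
  rcases le_total t s with h | h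
  · rw [min_eq_left (by exact_mod_cast h)]
    exact mgf_le t s ht h v R hv l
  · rw [min_eq_right (by exact_mod_cast h)]
    have := mgf_le s t hs h v R hv (-l)
    rw [neg_sq, Fintype.card_congr (Equiv.equivCongr (Equiv.sumComm (Fin s) (Fin t))
      (Equiv.refl β))] at this
    refine le_trans (le_of_eq ?_) this
    refine Fintype.sum_equiv (Equiv.equivCongr (Equiv.sumComm _ _) (Equiv.refl β)) _ _ ?_
    intro e
    congr 1
    simp [Equiv.equivCongr]
    ring

/-- patterns -/
lemma patterns (m n : ℕ) (hn : 2 ≤ n) (r : Fin n → ℝ) (a : Fin n → Fin m → ℝ) :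
    ∃ 𝒜 : Finset (Finset (Fin n)), (𝒜.card : ℝ) ≤ 2 * (n : ℝ) ^ m ∧
      ∀ p : Fin m → ℝ, Finset.univ.filter (fun j => ∑ i, a j i * p i < r j) ∈ 𝒜 := by
  classical
  let 𝒜 : Finset (Finset (Fin n)) := Finset.univ.filter (fun T => ∃ p : Fin m → ℝ,
    Finset.univ.filter (fun j => ∑ i, a j i * p i < r j) = T)
  have hpos : ∀ (S : Finset (Fin n)) (c : Fin n → ℝ), 𝒜.Shatters S →
      (∀ i, ∑ j ∈ S, c j * a j i = 0) → 0 ≤ ∑ j ∈ S, c j * r j ∧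
        ((∃ j ∈ S, 0 < c j) → 0 < ∑ j ∈ S, c j * r j) := by
    intro S c hS hc
    obtain ⟨T, hT, hST⟩ := hS (Finset.filter_subset (fun j => 0 < c j) S)
    obtain ⟨p, rfl⟩ := (Finset.mem_filter.1 hT).2
    have hsum : ∑ j ∈ S, c j * r j = ∑ j ∈ S, c j * (r j - ∑ i, a j i * p i) := by
      have : ∑ j ∈ S, c j * ∑ i, a j i * p i = 0 := by
        calc ∑ j ∈ S, c j * ∑ i, a j i * p i = ∑ i, (∑ j ∈ S, c j * a j i) * p i := by
              simp only [Finset.mul_sum, Finset.sum_mul]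
              rw [Finset.sum_comm]
              exact Finset.sum_congr rfl fun _ _ => Finset.sum_congr rfl fun _ _ => by ring
          _ = 0 := by simp [hc]
      simp only [mul_sub, Finset.sum_sub_distrib, this, sub_zero]
    have hmem : ∀ j ∈ S, (∑ i, a j i * p i < r j ↔ 0 < c j) := by
      intro j hj
      have := Finset.ext_iff.1 hST j
      simpa [hj] using this
    have hterm : ∀ j ∈ S, 0 ≤ c j * (r j - ∑ i, a j i * p i) := by
      intro j hj
      by_cases h : 0 < c j
      · exact mul_nonneg h.le (by linarith [(hmem j hj).2 h])
      · have h' : ¬ (∑ i, a j i * p i < r j) := fun h2 => h ((hmem j hj).1 h2)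
        exact mul_nonneg_of_nonpos_of_nonpos (not_lt.1 h) (by linarith [not_lt.1 h'])
    rw [hsum]
    refine ⟨Finset.sum_nonneg hterm, ?_⟩
    rintro ⟨j, hj, hcj⟩
    exact Finset.sum_pos' hterm ⟨j, hj, mul_pos hcj (by linarith [(hmem j hj).2 hcj])⟩
  have hcard : ∀ S : Finset (Fin n), 𝒜.Shatters S → S.card ≤ m := by
    intro S hS
    by_contra! hlt
    have hdep : ¬ LinearIndepOn ℝ a (S : Set (Fin n)) := by
      intro hli
      have := LinearIndependent.fintype_card_le_finrank hli
      simp at this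
      omega
    rw [linearIndepOn_finset_iff] at hdep
    push Not at hdep
    obtain ⟨c, hc0, j, hj, hcj⟩ := hdep
    have hc : ∀ i, ∑ j ∈ S, c j * a j i = 0 := by
      intro i
      have := congrFun hc0 i
      simpa using this
    have h1 := hpos S c hS hc
    have h2 := hpos S (fun j => - c j) hS (by intro i; simp [hc i])
    simp only [neg_mul, Finset.sum_neg_distrib] at h2
    rcases lt_or_gt_of_ne hcj with h | h
    · have := h2.2 ⟨j, hj, by linarith⟩
      linarith [h1.1]
    · have := h1.2 ⟨j, hj, h⟩
      linarith [h2.1]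
  refine ⟨𝒜, ?_, fun p => by simp [𝒜]⟩
  have hvc : 𝒜.vcDim ≤ m := by
    unfold Finset.vcDim
    exact Finset.sup_le fun S hS => hcard S (Finset.mem_shatterer.1 hS)
  have h1 : 𝒜.card ≤ ∑ k ∈ Finset.Iic m, n.choose k := by
    refine (Finset.card_le_card_shatterer 𝒜).trans ((Finset.card_shatterer_le_sum_vcDim).trans ?_)
    simp only [Fintype.card_fin]
    exact Finset.sum_le_sum_of_subset (Finset.Iic_subset_Iic.2 hvc)
  have h2 : ∀ m, ∑ k ∈ Finset.Iic m, n.choose k ≤ 2 * n ^ m := by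
    intro m
    rw [← Nat.range_succ_eq_Iic]
    induction m with
    | zero => simp
    | succ m ih =>
      rw [Finset.sum_range_succ]
      have h3 := Nat.choose_le_pow n (m + 1)
      have h4 : 2 * n ^ m ≤ n ^ (m + 1) := by rw [pow_succ']; exact Nat.mul_le_mul_right _ hn
      omega
  exact_mod_cast h1.trans (h2 m)

end Helpers

lemma opt_bound (x A B : ℝ) (hA : 0 < A) (hB : 0 ≤ B) (h : ∀ l : ℝ, 0 < l → x ≤ A / l + B * l) :
    x ≤ 2 * Real.sqrt (A * B) := by
  rcases hB.eq_or_lt with rfl | hB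
  · simp only [mul_zero, Real.sqrt_zero]
    by_contra! hx
    have := h (2 * A / x) (by positivity)
    have e : A / (2 * A / x) = x / 2 := by field_simp
    rw [e] at this
    linarith
  · have := h (Real.sqrt (A / B)) (Real.sqrt_pos.2 (by positivity))
    have e1 : A / Real.sqrt (A / B) = Real.sqrt (A * B) := by
      rw [Real.sqrt_div' _ hB.le, Real.sqrt_mul hA.le, div_div_eq_mul_div]
      nth_rw 1 [← Real.mul_self_sqrt hA.le]
      have := (Real.sqrt_pos.2 hA).ne'
      field_simp
    have e2 : B * Real.sqrt (A / B) = Real.sqrt (A * B) := by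
      rw [Real.sqrt_div' _ hB.le, Real.sqrt_mul hA.le]
      nth_rw 1 [← Real.mul_self_sqrt hB.le]
      have := (Real.sqrt_pos.2 hB).ne'
      field_simp
    linarith

lemma main_bound (m t s : ℕ) (ht : 1 ≤ t) (hs : 1 ≤ s) (r : Fin (t + s) → ℝ)
    (a : Fin (t + s) → Fin m → ℝ) (v : Fin (t + s) → ℝ) (R : ℝ) (hv : ∀ j, |v j| ≤ R) :
    (∑ σ : Equiv.Perm (Fin (t + s)),
        sSup ((fun p : Fin m → ℝ =>
            |(1 / (((t + s : ℕ) : ℝ) - t)) *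
              ∑ j ∈ Finset.univ.filter (fun j : Fin (t + s) => t ≤ (j : ℕ)),
                v (σ j) * (if (∑ i, a (σ j) i * p i) < r (σ j) then 1 else 0)
              - (1 / (t : ℝ)) * ∑ j ∈ Finset.univ.filter (fun j : Fin (t + s) => (j : ℕ) < t),
                v (σ j) * (if (∑ i, a (σ j) i * p i) < r (σ j) then 1 else 0)|) ''
          {p | ∀ i, 0 ≤ p i})) / (Nat.factorial (t + s) : ℝ)
      ≤ 4 * R / Real.sqrt (min (t : ℝ) (((t + s : ℕ) : ℝ) - t)) +
          2 * Real.sqrt (2 * R ^ 2 * m * Real.log ((t + s : ℕ) : ℝ)) /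
            Real.sqrt (min (t : ℝ) (((t + s : ℕ) : ℝ) - t)) := by
  have hst : ((t + s : ℕ) : ℝ) - t = s := by push_cast; ring
  rw [hst]
  have ht0 : (0 : ℝ) < t := by exact_mod_cast ht
  have hs0 : (0 : ℝ) < s := by exact_mod_cast hs
  have hR : 0 ≤ R := (abs_nonneg _).trans (hv ⟨0, by omega⟩)
  set μ : ℝ := min (t : ℝ) s with hμ
  have hμ0 : 0 < μ := lt_min ht0 hs0
  obtain ⟨𝒜, hcard, hmem⟩ := patterns m (t + s) (by omega) r a
  have hn0 : (0 : ℝ) < ((t + s : ℕ) : ℝ) := by exact_mod_cast (by omega : 0 < (t + s))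
  -- the reindexed statistic
  let X : Finset (Fin (t + s)) → ((Fin t ⊕ Fin s) ≃ Fin (t + s)) → ℝ := fun T e =>
    (1 / (s : ℝ)) * ∑ j, (if e (Sum.inr j) ∈ T then v (e (Sum.inr j)) else 0) -
        (1 / (t : ℝ)) * ∑ j, (if e (Sum.inl j) ∈ T then v (e (Sum.inl j)) else 0)
  have hmgf : ∀ T (l : ℝ), ∑ e : (Fin t ⊕ Fin s) ≃ Fin (t + s), Real.exp (l * X T e) ≤
      ((t + s).factorial : ℝ) * Real.exp (2 * l ^ 2 * R ^ 2 / μ) := by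
    intro T l
    have := mgf_le_min t s ht hs (fun b : Fin (t + s) => if b ∈ T then v b else 0) R
      (by intro b; split_ifs
          · exact hv b
          · simpa using hR) l
    rw [Fintype.card_equiv finSumFinEquiv] at this
    simpa [Fintype.card_sum, X, μ] using this
  let M : ((Fin t ⊕ Fin s) ≃ Fin (t + s)) → ℝ := fun e => sSup ((fun p : Fin m → ℝ =>
    |X (Finset.univ.filter (fun j => ∑ i, a j i * p i < r j)) e|) '' {p | ∀ i, 0 ≤ p i})
  have hre : ∑ σ : Equiv.Perm (Fin (t + s)),
        sSup ((fun p : Fin m → ℝ =>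
            |(1 / (s : ℝ)) *
              ∑ j ∈ Finset.univ.filter (fun j : Fin (t + s) => t ≤ (j : ℕ)),
                v (σ j) * (if (∑ i, a (σ j) i * p i) < r (σ j) then 1 else 0)
              - (1 / (t : ℝ)) * ∑ j ∈ Finset.univ.filter (fun j : Fin (t + s) => (j : ℕ) < t),
                v (σ j) * (if (∑ i, a (σ j) i * p i) < r (σ j) then 1 else 0)|) ''
          {p | ∀ i, 0 ≤ p i}) = ∑ e, M e := by
    refine Fintype.sum_equiv (Equiv.equivCongr finSumFinEquiv.symm (Equiv.refl (Fin (t + s)))) _ _ ?_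
    intro σ
    simp only [M]
    congr 2
    funext p
    congr 1
    simp only [X, Finset.sum_filter]
    congr 2
    · rw [Fin.sum_univ_add]
      simp [Equiv.equivCongr]
      exact Finset.sum_eq_zero fun x _ => if_neg (not_le.2 x.isLt)
    · rw [Fin.sum_univ_add]
      simp [Equiv.equivCongr]
  rw [hre]
  set L : ℝ := Real.log 4 + m * Real.log ((t + s : ℕ) : ℝ) with hL
  have hlogn : 0 ≤ Real.log ((t + s : ℕ) : ℝ) := Real.log_nonneg (by exact_mod_cast (by omega : 1 ≤ (t + s)))
  have hlog4 : 0 < Real.log 4 := Real.log_pos (by norm_num)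
  have hLpos : 0 < L := by positivity
  have hfac : (0 : ℝ) < (t + s).factorial := by exact_mod_cast (t + s).factorial_pos
  have hcardE : (Fintype.card ((Fin t ⊕ Fin s) ≃ Fin (t + s)) : ℝ) = (t + s).factorial := by
    rw [Fintype.card_equiv finSumFinEquiv]; simp
  have hopt : ∀ l : ℝ, 0 < l → (∑ e, M e) / ((t + s).factorial : ℝ) ≤ L / l + (2 * R ^ 2 / μ) * l := by
    intro l hl
    set C : ℝ := Real.exp (L + 2 * l ^ 2 * R ^ 2 / μ) with hC
    have hC0 : 0 < C := Real.exp_pos _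
    let Z : ((Fin t ⊕ Fin s) ≃ Fin (t + s)) → ℝ := fun e =>
      ∑ T ∈ 𝒜, (Real.exp (l * X T e) + Real.exp (-l * X T e))
    have hZ : ∑ e, Z e ≤ (t + s).factorial * C := by
      simp only [Z]
      rw [Finset.sum_comm]
      have : ∀ T ∈ 𝒜, ∑ e, (Real.exp (l * X T e) + Real.exp (-l * X T e)) ≤
          2 * (((t + s).factorial : ℝ) * Real.exp (2 * l ^ 2 * R ^ 2 / μ)) := by
        intro T _
        rw [Finset.sum_add_distrib]
        have h1 := hmgf T l
        have h2 := hmgf T (-l)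
        rw [neg_sq] at h2
        linarith
      refine (Finset.sum_le_sum this).trans ?_
      rw [Finset.sum_const, nsmul_eq_mul, hC, Real.exp_add]
      have hexpL : Real.exp L = 4 * ((t + s : ℕ) : ℝ) ^ m := by
        rw [hL, Real.exp_add, Real.exp_log (by norm_num), Real.exp_nat_mul, Real.exp_log hn0]
      rw [hexpL]
      have hq : 0 ≤ ((t + s).factorial : ℝ) * Real.exp (2 * l ^ 2 * R ^ 2 / μ) := by positivity
      nlinarith [mul_le_mul_of_nonneg_right hcard hq]
    have hM : ∀ e, l * M e ≤ Z e / C + (L + 2 * l ^ 2 * R ^ 2 / μ) - 1 := by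
      intro e
      have : M e ≤ (Z e / C + (L + 2 * l ^ 2 * R ^ 2 / μ) - 1) / l := by
        refine csSup_le ⟨_, Set.mem_image_of_mem _ (show (0 : Fin m → ℝ) ∈ _ from fun _ => le_rfl)⟩ ?_
        rintro _ ⟨p, -, rfl⟩
        dsimp only
        set T := Finset.univ.filter (fun j => ∑ i, a j i * p i < r j) with hT
        have hTm : T ∈ 𝒜 := hmem p
        rw [le_div_iff₀ hl]
        have h1 : Real.exp (|X T e| * l) ≤ Z e := by
          have hs1 : Real.exp (l * X T e) + Real.exp (-l * X T e) ≤ Z e :=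
            Finset.single_le_sum (f := fun T => Real.exp (l * X T e) + Real.exp (-l * X T e))
              (fun T _ => by positivity) hTm
          have p1 := Real.exp_pos (l * X T e)
          have p2 := Real.exp_pos (-l * X T e)
          rcases abs_cases (X T e) with ⟨h, _⟩ | ⟨h, _⟩
          · rw [h, mul_comm]; linarith
          · rw [h, show -X T e * l = -l * X T e by ring]; linarith
        have h2 := Real.add_one_le_exp (|X T e| * l - (L + 2 * l ^ 2 * R ^ 2 / μ))
        rw [Real.exp_sub, ← hC] at h2
        have h3 : Real.exp (|X T e| * l) / C ≤ Z e / C := by gcongr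
        linarith
      rw [le_div_iff₀ hl] at this
      linarith
    have hsum := Finset.sum_le_sum (fun e (_ : e ∈ Finset.univ) => hM e)
    rw [Finset.sum_sub_distrib, Finset.sum_add_distrib, ← Finset.mul_sum, ← Finset.sum_div,
      Finset.sum_const, Finset.sum_const, Finset.card_univ, nsmul_eq_mul, nsmul_eq_mul, hcardE] at hsum
    have hZ2 : (∑ e, Z e) / C ≤ (t + s).factorial := by rwa [div_le_iff₀ hC0]
    rw [div_le_iff₀ hfac]
    have hfin : l * ∑ e, M e ≤ (t + s).factorial * (L + 2 * l ^ 2 * R ^ 2 / μ) := by linarith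
    have e3 : (L / l + (2 * R ^ 2 / μ) * l) * (t + s).factorial =
        ((t + s).factorial * (L + 2 * l ^ 2 * R ^ 2 / μ)) / l := by field_simp
    rw [e3, le_div_iff₀ hl]
    linarith
  refine (opt_bound _ L _ hLpos (by positivity) hopt).trans ?_
  have hl4 : Real.log 4 ≤ 2 := by
    rw [show (4 : ℝ) = 2 ^ 2 by norm_num, Real.log_pow]
    have := Real.log_two_lt_d9
    push_cast
    linarith
  have e4 : L * (2 * R ^ 2 / μ) ≤ ((2 * R + Real.sqrt (2 * R ^ 2 * m * Real.log ((t + s : ℕ) : ℝ))) / Real.sqrt μ) ^ 2 := by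
    rw [div_pow, Real.sq_sqrt hμ0.le, mul_div_assoc']
    gcongr
    have hsq := Real.sq_sqrt (show 0 ≤ 2 * R ^ 2 * m * Real.log ((t + s : ℕ) : ℝ) by positivity)
    have hnn := Real.sqrt_nonneg (2 * R ^ 2 * m * Real.log ((t + s : ℕ) : ℝ))
    have : Real.log 4 * (2 * R ^ 2) ≤ 2 * (2 * R ^ 2) := by gcongr
    nlinarith [mul_nonneg hR hnn]
  have e5 := Real.sqrt_le_sqrt e4
  rw [Real.sqrt_sq (by positivity)] at e5
  calc _ ≤ 2 * ((2 * R + Real.sqrt (2 * R ^ 2 * m * Real.log ((t + s : ℕ) : ℝ))) / Real.sqrt μ) := by linarith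
    _ = _ := by ring


/-- (Proposition 2 of the paper, via permutational Rademacher
complexity.) Under a uniformly random ordering of the data, the per-period averages of
rewards (1) and of each resource consumption (2) induced by thresholding with any
nonnegative dual price `p` are uniformly (over `p ≥ 0`) close between the first `t` and
the last `n − t` observations; `μ = min{t, n−t}`, and expectations are averages over all
`n!` permutations. -/
theorem stmt13 (m n : ℕ) (r : Fin n → ℝ) (a : Fin n → Fin m → ℝ)
    (rbar abar : ℝ) (hr : ∀ j, |r j| ≤ rbar) (ha : ∀ j i, |a j i| ≤ abar)
    (t : ℕ) (ht1 : 1 ≤ t) (ht2 : t ≤ n - 1) :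
    ((∑ σ : Equiv.Perm (Fin n),
        sSup ((fun p : Fin m → ℝ =>
            |(1 / ((n : ℝ) - t)) * ∑ j ∈ Finset.univ.filter (fun j : Fin n => t ≤ (j : ℕ)),
                r (σ j) * (if (∑ i, a (σ j) i * p i) < r (σ j) then 1 else 0)
              - (1 / (t : ℝ)) * ∑ j ∈ Finset.univ.filter (fun j : Fin n => (j : ℕ) < t),
                r (σ j) * (if (∑ i, a (σ j) i * p i) < r (σ j) then 1 else 0)|) ''
          {p | ∀ i, 0 ≤ p i})) / (Nat.factorial n : ℝ)
      ≤ 4 * rbar / Real.sqrt (min t (n - t)) +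
          2 * Real.sqrt (2 * rbar ^ 2 * m * Real.log n) / Real.sqrt (min t (n - t))) ∧
    ∀ i₀ : Fin m,
      (∑ σ : Equiv.Perm (Fin n),
          sSup ((fun p : Fin m → ℝ =>
              |(1 / ((n : ℝ) - t)) * ∑ j ∈ Finset.univ.filter (fun j : Fin n => t ≤ (j : ℕ)),
                  a (σ j) i₀ * (if (∑ i, a (σ j) i * p i) < r (σ j) then 1 else 0)
                - (1 / (t : ℝ)) * ∑ j ∈ Finset.univ.filter (fun j : Fin n => (j : ℕ) < t),
                  a (σ j) i₀ * (if (∑ i, a (σ j) i * p i) < r (σ j) then 1 else 0)|) ''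
            {p | ∀ i, 0 ≤ p i})) / (Nat.factorial n : ℝ)
        ≤ 4 * abar / Real.sqrt (min t (n - t)) +
            2 * Real.sqrt (2 * abar ^ 2 * m * Real.log n) / Real.sqrt (min t (n - t)) := by
  obtain ⟨s, rfl⟩ : ∃ s, n = t + s := ⟨n - t, by omega⟩
  exact ⟨main_bound m t s ht1 (by omega) r a r rbar hr,
    fun i₀ => main_bound m t s ht1 (by omega) r a (fun j => a j i₀) abar (fun j => ha j i₀)⟩
end

section
/- Fix a dataset (r_j, a_j) ∈ ℝ × ℝ^m, j = 1,…,n, with |r_j| ≤ r̄ and ‖a_j‖_∞ ≤ ā for all j, let d ∈ ℝ^m satisfy 0 < d̲ ≤ d_i ≤ d̄ for all i, and assume the data are in general position: for every p ∈ ℝ^m there are at most m indices j with r_j = a_jᵀp. Let σ be a uniformly random permutation of {1,…,n}, let R_t*(σ) denote the optimal value of the scaled LP: maximize Σ_{j=1}^t r_{σ(j)} x_j over x ∈ [0,1]^t subject to Σ_{j=1}^t a_{i,σ(j)} x_j ≤ t·d_i for i = 1,…,m, and let R_n* be the optimal value of the full LP (the case t = n). Then Σ_{t=1}^n ( (1/n)·R_n*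 − (1/t)·E[R_t*(σ)] ) ≤ m·r̄ + (r̄/d̲)·√n·log n + m·r̄·log n + r̄·max{16ā², e^{16ā²}, e}, where the expectation is the average over all n! permutations. -/
/-- Optimal value of the `t`-prefix scaled LP
`max Σ_{j<t} r_j x_j  s.t.  Σ_{j<t} a_{ij} x_j ≤ t d_i, x ∈ [0,1]`. (Coordinates with
index `≥ t` are unconstrained and do not enter the objective or the constraints, so
this is the optimal value of the LP on the first `t` columns.) -/
noncomputable def prefLPval (n m : ℕ) (r : Fin n → ℝ) (a : Fin n → Fin m → ℝ)
    (d : Fin m → ℝ) (t : ℕ) : ℝ :=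
  sSup ((fun x : Fin n → ℝ =>
      ∑ j ∈ Finset.univ.filter (fun j : Fin n => (j : ℕ) < t), r j * x j) ''
    {x | (∀ j, 0 ≤ x j ∧ x j ≤ 1) ∧
      ∀ i, ∑ j ∈ Finset.univ.filter (fun j : Fin n => (j : ℕ) < t), a j i * x j ≤
        (t : ℝ) * d i})

open MeasureTheory ProbabilityTheory in
lemma hoeff_fin (N : ℕ) (b : Fin (N+1) → ℝ) (A : ℝ) (hA : 0 ≤ A) (hb : ∀ j, |b j| ≤ A) (x : ℝ) :
    ∑ p, Real.exp (x * (b p - (∑ j, b j) / ((N+1 : ℕ) : ℝ))) ≤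
      ((N+1 : ℕ) : ℝ) * Real.exp (x ^ 2 * A ^ 2 / 2) := by
  set P : PMF (Fin (N+1)) := PMF.uniformOfFintype (Fin (N+1)) with hP
  have hint : ∀ f : Fin (N+1) → ℝ, ∫ p, f p ∂P.toMeasure = (∑ p, f p) / ((N+1 : ℕ) : ℝ) := by
    intro f
    rw [PMF.integral_eq_sum, Finset.sum_div]
    refine Finset.sum_congr rfl fun p _ => ?_
    simp [hP, PMF.uniformOfFintype_apply, div_eq_inv_mul]
    left
    rw [← ENNReal.ofReal_natCast, ENNReal.toReal_add] <;> simp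
  have h := hasSubgaussianMGF_of_mem_Icc (X := b) (μ := P.toMeasure) (a := -A) (b := A)
    (measurable_of_finite b).aemeasurable
    (Filter.Eventually.of_forall fun j => ⟨(abs_le.1 (hb j)).1, (abs_le.1 (hb j)).2⟩)
  have h2 := h.mgf_le x
  rw [mgf, hint, hint, div_le_iff₀ (by positivity)] at h2
  refine h2.trans (le_of_eq ?_)
  rw [mul_comm]
  congr 2
  have : ‖A - -A‖ = 2 * A := by rw [Real.norm_of_nonneg] <;> linarith
  rw [NNReal.coe_pow, NNReal.coe_div, coe_nnnorm, this]
  simp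
  ring

lemma mgf_perm (A : ℝ) (hA : 0 ≤ A) (lam : ℝ) : ∀ (n : ℕ) (b : Fin n → ℝ) (t : ℕ), t ≤ n →
    (∀ j, |b j| ≤ A) →
    ∑ σ : Equiv.Perm (Fin n), Real.exp (lam * ((∑ j ∈ Finset.univ.filter
      (fun j : Fin n => (j : ℕ) < t), b (σ j)) - t * ((∑ j, b j) / (n : ℝ)))) ≤
      (Nat.factorial n : ℝ) * Real.exp (lam ^ 2 * t * A ^ 2 / 2) := by
  intro n
  induction n with
  | zero =>
    intro b t ht hb
    obtain rfl : t = 0 := by omega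
    simp
  | succ n ih =>
    intro b t ht hb
    rcases t with _ | s
    · simp [Fintype.card_perm]
    rw [← Equiv.sum_comp (Equiv.Perm.decomposeFin.symm), Fintype.sum_prod_type]
    set μ : ℝ := (∑ j, b j) / ((n+1 : ℕ) : ℝ) with hμ
    set c : ℝ := 1 - (s : ℝ) / n with hc
    have hsn : s ≤ n := by omega
    have hc0 : 0 ≤ c := by
      have : (s : ℝ) / n ≤ 1 := div_le_one_of_le₀ (by exact_mod_cast hsn) (by positivity)
      linarith
    have hc1 : c ≤ 1 := by
      have : 0 ≤ (s : ℝ) / n := by positivity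
      linarith
    have key : ∀ p : Fin (n+1), ∑ e : Equiv.Perm (Fin n), Real.exp (lam * ((∑ j ∈ Finset.univ.filter
      (fun j : Fin (n+1) => (j : ℕ) < s + 1), b (Equiv.Perm.decomposeFin.symm (p, e) j))
        - ((s + 1 : ℕ) : ℝ) * μ)) ≤
        Real.exp ((lam * c) * (b p - μ)) * ((Nat.factorial n : ℝ) * Real.exp (lam ^ 2 * s * A ^ 2 / 2)) := by
      intro p
      set b' : Fin n → ℝ := fun j => b (Equiv.swap 0 p j.succ) with hb'
      have hsum : ∑ j, b j = b p + ∑ j, b' j := by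
        rw [← Equiv.sum_comp (Equiv.swap 0 p) b, Fin.sum_univ_succ]
        simp [hb']
      refine le_trans (le_of_eq ?_) (mul_le_mul_of_nonneg_left (ih b' s hsn (fun j => hb _))
        (Real.exp_pos _).le)
      rw [Finset.mul_sum]
      refine Finset.sum_congr rfl fun e _ => ?_
      rw [← Real.exp_add]
      congr 1
      have h1 : ∑ j ∈ Finset.univ.filter
        (fun j : Fin (n+1) => (j : ℕ) < s + 1), b (Equiv.Perm.decomposeFin.symm (p, e) j)
        = b p + ∑ j ∈ Finset.univ.filter (fun j : Fin n => (j : ℕ) < s), b' (e j) := by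
        rw [Finset.sum_filter, Finset.sum_filter, Fin.sum_univ_succ]
        simp [hb']
      rw [h1]
      have h2 : b p - ((s+1 : ℕ) : ℝ) * μ = c * (b p - μ) - s * ((∑ j, b' j) / (n : ℝ)) := by
        have h3 : ∑ j, b' j = ((n + 1 : ℕ) : ℝ) * μ - b p := by
          rw [hμ, mul_div_cancel₀ _ (by positivity)]; linarith
        rw [h3, hc]
        rcases Nat.eq_zero_or_pos n with h0 | h0
        · obtain rfl : s = 0 := by omega
          simp
        · have : (n : ℝ) ≠ 0 := by positivity
          field_simp
          push_cast
          ring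
      linear_combination lam * h2
    refine (Finset.sum_le_sum fun p _ => key p).trans ?_
    rw [← Finset.sum_mul]
    have h4 := hoeff_fin n b A hA hb (lam * c)
    have h5 : Real.exp ((lam * c) ^ 2 * A ^ 2 / 2) ≤ Real.exp (lam ^ 2 * A ^ 2 / 2) := by
      apply Real.exp_le_exp.2
      have : c ^ 2 ≤ 1 := by nlinarith
      have h6 : 0 ≤ lam ^ 2 * A ^ 2 := by positivity
      nlinarith
    calc _ ≤ (((n+1 : ℕ) : ℝ) * Real.exp (lam ^ 2 * A ^ 2 / 2)) *
          ((Nat.factorial n : ℝ) * Real.exp (lam ^ 2 * s * A ^ 2 / 2)) := by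
          apply mul_le_mul_of_nonneg_right _ (by positivity)
          exact h4.trans (mul_le_mul_of_nonneg_left h5 (by positivity))
      _ = (Nat.factorial (n+1) : ℝ) * (Real.exp (lam ^ 2 * A ^ 2 / 2) * Real.exp (lam ^ 2 * s * A ^ 2 / 2)) := by
          rw [Nat.factorial_succ]; push_cast; ring
      _ = _ := by
          rw [← Real.exp_add]; congr 2; push_cast; ring

lemma sum_perm_apply (n : ℕ) (f : Fin n → ℝ) (j : Fin n) :
    (n : ℝ) * ∑ σ : Equiv.Perm (Fin n), f (σ j) = (Nat.factorial n : ℝ) * ∑ k, f k := by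
  have h1 : ∀ k, ∑ σ : Equiv.Perm (Fin n), f (σ k) = ∑ σ : Equiv.Perm (Fin n), f (σ j) := by
    intro k
    rw [← Equiv.sum_comp (Equiv.mulRight (Equiv.swap j k))]
    simp
  have h2 : ∑ k, ∑ σ : Equiv.Perm (Fin n), f (σ k) = (n : ℝ) * ∑ σ : Equiv.Perm (Fin n), f (σ j) := by
    simp [h1]
  rw [← h2, Finset.sum_comm]
  simp [Equiv.sum_comp, Fintype.card_perm]

lemma sum_perm_prefix (n : ℕ) (f : Fin n → ℝ) (t : ℕ) (ht : t ≤ n) :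
    (n : ℝ) * ∑ σ : Equiv.Perm (Fin n), ∑ j ∈ Finset.univ.filter (fun j : Fin n => (j : ℕ) < t), f (σ j)
      = (Nat.factorial n : ℝ) * (t * ∑ k, f k) := by
  rw [Finset.sum_comm, Finset.mul_sum]
  simp only [sum_perm_apply]
  rw [Finset.sum_const, nsmul_eq_mul, Fin.card_filter_val_lt, min_eq_right ht]
  ring

lemma prefLP_bdd (n m : ℕ) (r : Fin n → ℝ) (a : Fin n → Fin m → ℝ) (d : Fin m → ℝ) (t : ℕ)
    (ht : t ≤ n) (rbar : ℝ) (hr : ∀ j, |r j| ≤ rbar) (x : Fin n → ℝ)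
    (hx : ∀ j, 0 ≤ x j ∧ x j ≤ 1) :
    |∑ j ∈ Finset.univ.filter (fun j : Fin n => (j : ℕ) < t), r j * x j| ≤ t * rbar := by
  refine (Finset.abs_sum_le_sum_abs _ _).trans ?_
  have : ∀ j ∈ Finset.univ.filter (fun j : Fin n => (j : ℕ) < t), |r j * x j| ≤ rbar := by
    intro j _
    rw [abs_mul, abs_of_nonneg (hx j).1]
    have := abs_nonneg (r j)
    nlinarith [hr j, (hx j).1, (hx j).2]
  refine (Finset.sum_le_card_nsmul _ _ _ this).trans (le_of_eq ?_)
  rw [nsmul_eq_mul, Fin.card_filter_val_lt, min_eq_right ht]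

lemma le_prefLPval (n m : ℕ) (r : Fin n → ℝ) (a : Fin n → Fin m → ℝ) (d : Fin m → ℝ) (t : ℕ)
    (ht : t ≤ n) (rbar : ℝ) (hr : ∀ j, |r j| ≤ rbar) (x : Fin n → ℝ)
    (hx : ∀ j, 0 ≤ x j ∧ x j ≤ 1)
    (hf : ∀ i, ∑ j ∈ Finset.univ.filter (fun j : Fin n => (j : ℕ) < t), a j i * x j ≤
        (t : ℝ) * d i) :
    ∑ j ∈ Finset.univ.filter (fun j : Fin n => (j : ℕ) < t), r j * x j ≤ prefLPval n m r a d t := by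
  apply le_csSup
  · refine ⟨t * rbar, ?_⟩
    rintro _ ⟨y, hy, rfl⟩
    exact (abs_le.1 (prefLP_bdd n m r a d t ht rbar hr y hy.1)).2
  · exact ⟨x, ⟨hx, hf⟩, rfl⟩

lemma prefLPval_nonneg (n m : ℕ) (r : Fin n → ℝ) (a : Fin n → Fin m → ℝ) (d : Fin m → ℝ) (t : ℕ)
    (ht : t ≤ n) (rbar : ℝ) (hr : ∀ j, |r j| ≤ rbar) (hd : ∀ i, 0 ≤ d i) :
    0 ≤ prefLPval n m r a d t := by
  have := le_prefLPval n m r a d t ht rbar hr (fun _ => 0) (by simp)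
    (by intro i; simpa using mul_nonneg (Nat.cast_nonneg t) (hd i))
  simpa using this

lemma prefLPval_le (n m : ℕ) (r : Fin n → ℝ) (a : Fin n → Fin m → ℝ) (d : Fin m → ℝ) (t : ℕ)
    (hd : ∀ i, 0 ≤ d i) (C : ℝ)
    (h : ∀ x : Fin n → ℝ, (∀ j, 0 ≤ x j ∧ x j ≤ 1) →
      (∀ i, ∑ j ∈ Finset.univ.filter (fun j : Fin n => (j : ℕ) < t), a j i * x j ≤
        (t : ℝ) * d i) →
      ∑ j ∈ Finset.univ.filter (fun j : Fin n => (j : ℕ) < t), r j * x j ≤ C) :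
    prefLPval n m r a d t ≤ C := by
  apply csSup_le
  · refine ⟨_, fun _ => 0, ⟨by simp, ?_⟩, rfl⟩
    intro i; simpa using mul_nonneg (Nat.cast_nonneg t) (hd i)
  · rintro _ ⟨y, hy, rfl⟩
    exact h y hy.1 hy.2

/-- Scaling a nearly feasible point. -/
lemma scale_bound (n m : ℕ) (r : Fin n → ℝ) (a : Fin n → Fin m → ℝ) (d : Fin m → ℝ) (t : ℕ)
    (ht0 : 0 < t) (ht : t ≤ n) (rbar dlb : ℝ) (hdlb : 0 < dlb) (hd : ∀ i, dlb ≤ d i)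
    (hrb : 0 ≤ rbar)
    (hr : ∀ j, |r j| ≤ rbar) (x : Fin n → ℝ) (hx : ∀ j, 0 ≤ x j ∧ x j ≤ 1) (z : ℝ) (hz : 0 ≤ z)
    (hf : ∀ i, ∑ j ∈ Finset.univ.filter (fun j : Fin n => (j : ℕ) < t), a j i * x j
        - (t : ℝ) * d i ≤ z) :
    ∑ j ∈ Finset.univ.filter (fun j : Fin n => (j : ℕ) < t), r j * x j - rbar / dlb * z
      ≤ prefLPval n m r a d t := by
  have htR : (0 : ℝ) < t := by exact_mod_cast ht0
  set w : ℝ := z / (t * dlb) with hw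
  have hw0 : 0 ≤ w := by positivity
  have hzw : z = w * (t * dlb) := by rw [hw]; field_simp
  set θ : ℝ := 1 / (1 + w) with hθ
  have hθ0 : 0 ≤ θ := by positivity
  have hθm : θ * (1 + w) = 1 := by rw [hθ]; field_simp
  have hθ1 : θ ≤ 1 := by nlinarith
  have hθw : 1 - θ ≤ w := by nlinarith
  have h := le_prefLPval n m r a d t ht rbar hr (fun j => θ * x j)
    (fun j => ⟨mul_nonneg hθ0 (hx j).1, mul_le_one₀ hθ1 (hx j).1 (hx j).2⟩) (by
      intro i
      have : ∀ j, a j i * (θ * x j) = θ * (a j i * x j) := fun j => by ring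
      simp only [this, ← Finset.mul_sum]
      have h1 := hf i
      have h2 : ∑ j ∈ Finset.univ.filter (fun j : Fin n => (j : ℕ) < t), a j i * x j
          ≤ (1 + w) * (t * d i) := by
        have : w * (t * dlb) ≤ w * (t * d i) :=
          mul_le_mul_of_nonneg_left (mul_le_mul_of_nonneg_left (hd i) htR.le) hw0
        linarith
      calc _ ≤ θ * ((1 + w) * (t * d i)) := mul_le_mul_of_nonneg_left h2 hθ0
        _ = _ := by rw [← mul_assoc, hθm, one_mul])
  refine le_trans ?_ h
  have : ∀ j, r j * (θ * x j) = θ * (r j * x j) := fun j => by ring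
  simp only [this, ← Finset.mul_sum]
  have hV := prefLP_bdd n m r a d t ht rbar hr x hx
  set V := ∑ j ∈ Finset.univ.filter (fun j : Fin n => (j : ℕ) < t), r j * x j
  have h1 : (1 - θ) * V ≤ w * (t * rbar) :=
    calc (1 - θ) * V ≤ (1 - θ) * (t * rbar) :=
          mul_le_mul_of_nonneg_left (abs_le.1 hV).2 (by linarith)
      _ ≤ _ := mul_le_mul_of_nonneg_right hθw (by positivity)
  have h2 : rbar / dlb * z = w * (t * rbar) := by rw [hzw]; field_simp
  linarith

/-- Expected maximal violation. -/
lemma exp_viol (n m : ℕ) (hm : 0 < m) (hn : 0 < n) (a : Fin n → Fin m → ℝ) (d : Fin m → ℝ)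
    (abar : ℝ) (hab : 0 ≤ abar) (ha : ∀ j i, |a j i| ≤ abar) (t : ℕ) (ht : t ≤ n) (hmt : m < t)
    (hlog : 16 * abar ^ 2 ≤ Real.log t)
    (x : Fin n → ℝ) (hx : ∀ j, 0 ≤ x j ∧ x j ≤ 1)
    (hf : ∀ i, ∑ j, a j i * x j ≤ (n : ℝ) * d i) :
    ∃ z : Equiv.Perm (Fin n) → ℝ, (∀ σ, 0 ≤ z σ) ∧
      (∀ σ i, ∑ j ∈ Finset.univ.filter (fun j : Fin n => (j : ℕ) < t), a (σ j) i * x (σ j)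
        - (t : ℝ) * d i ≤ z σ) ∧
      ∑ σ, z σ ≤ (Nat.factorial n : ℝ) * (3 / 8 * (Real.sqrt t * Real.log t)) := by
  have htR : (0 : ℝ) < t := by exact_mod_cast (by omega : 0 < t)
  have hnR : (0 : ℝ) < n := by exact_mod_cast hn
  have hne : (Finset.univ : Finset (Fin m)).Nonempty := ⟨⟨0, hm⟩, Finset.mem_univ _⟩
  set D : Equiv.Perm (Fin n) → Fin m → ℝ := fun σ i =>
    ∑ j ∈ Finset.univ.filter (fun j : Fin n => (j : ℕ) < t), a (σ j) i * x (σ j)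
        - (t : ℝ) * d i with hD
  set z : Equiv.Perm (Fin n) → ℝ := fun σ => max 0 (Finset.univ.sup' hne (D σ)) with hz
  refine ⟨z, fun σ => le_max_left _ _, fun σ i =>
    (Finset.le_sup' (D σ) (Finset.mem_univ i)).trans (le_max_right _ _), ?_⟩
  set q : ℝ := Real.sqrt t with hq
  have hq0 : 0 < q := Real.sqrt_pos.2 htR
  have hqq : q ^ 2 = t := Real.sq_sqrt htR.le
  set lam : ℝ := 4 / q with hlam
  have hlam0 : 0 < lam := by positivity
  have hexp : ∀ σ, Real.exp (lam * z σ) ≤ 1 + ∑ i, Real.exp (lam * D σ i) := by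
    intro σ
    have hs : 0 ≤ ∑ i, Real.exp (lam * D σ i) := Finset.sum_nonneg fun i _ => (Real.exp_pos _).le
    rcases max_choice 0 (Finset.univ.sup' hne (D σ)) with h | h
    · simp only [hz, h]; simp; exact hs
    · obtain ⟨i, hi, hi2⟩ := Finset.exists_mem_eq_sup' hne (D σ)
      simp only [hz, h, hi2]
      have := Finset.single_le_sum (f := fun i => Real.exp (lam * D σ i))
        (fun i _ => (Real.exp_pos _).le) hi
      linarith
  have hmgf : ∀ i, ∑ σ, Real.exp (lam * D σ i) ≤
      (Nat.factorial n : ℝ) * Real.exp (lam ^ 2 * t * abar ^ 2 / 2) := by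
    intro i
    refine le_trans (Finset.sum_le_sum fun σ _ => ?_)
      (mgf_perm abar hab lam n (fun j => a j i * x j) t ht (fun j => ?_))
    · apply Real.exp_le_exp.2
      apply mul_le_mul_of_nonneg_left _ hlam0.le
      have : (∑ j, a j i * x j) / (n : ℝ) ≤ d i := by
        rw [div_le_iff₀ hnR]; linarith [hf i]
      have := mul_le_mul_of_nonneg_left this htR.le
      simp only [hD]
      linarith
    · rw [abs_mul, abs_of_nonneg (hx j).1]
      nlinarith [ha j i, (hx j).1, (hx j).2, abs_nonneg (a j i)]
  set B : ℝ := lam ^ 2 * t * abar ^ 2 / 2 with hB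
  have hB0 : 0 ≤ B := by positivity
  have hF : (0 : ℝ) < Nat.factorial n := by exact_mod_cast Nat.factorial_pos n
  have htot : ∑ σ, Real.exp (lam * z σ) ≤ (Nat.factorial n : ℝ) * (t * Real.exp B) := by
    calc _ ≤ ∑ σ, (1 + ∑ i, Real.exp (lam * D σ i)) := Finset.sum_le_sum fun σ _ => hexp σ
      _ = (Nat.factorial n : ℝ) + ∑ i, ∑ σ, Real.exp (lam * D σ i) := by
          rw [Finset.sum_add_distrib, Finset.sum_comm]
          simp [Fintype.card_perm]
      _ ≤ (Nat.factorial n : ℝ) * Real.exp B + ∑ i : Fin m, (Nat.factorial n : ℝ) * Real.exp B := by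
          apply add_le_add
          · have := Real.one_le_exp hB0
            nlinarith
          · exact Finset.sum_le_sum fun i _ => hmgf i
      _ = (Nat.factorial n : ℝ) * (((m + 1 : ℕ) : ℝ) * Real.exp B) := by
          simp; ring
      _ ≤ _ := by
          apply mul_le_mul_of_nonneg_left _ hF.le
          apply mul_le_mul_of_nonneg_right _ (Real.exp_pos _).le
          exact_mod_cast hmt
  set K : ℝ := Real.log t + B with hK
  have hpt : ∀ σ, lam * z σ ≤ K - 1 + Real.exp (-K) * Real.exp (lam * z σ) := by
    intro σ
    rw [← Real.exp_add]
    have := Real.add_one_le_exp (-K + lam * z σ)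
    linarith
  have hKe : Real.exp (-K) * (t * Real.exp B) = 1 := by
    have : Real.exp K = t * Real.exp B := by rw [hK, Real.exp_add, Real.exp_log htR]
    rw [← this, ← Real.exp_add]; simp
  have hsum : lam * ∑ σ, z σ ≤ (Nat.factorial n : ℝ) * K := by
    calc _ = ∑ σ, lam * z σ := Finset.mul_sum _ _ _
      _ ≤ ∑ σ, (K - 1 + Real.exp (-K) * Real.exp (lam * z σ)) := Finset.sum_le_sum fun σ _ => hpt σ
      _ = (Nat.factorial n : ℝ) * (K - 1) + Real.exp (-K) * ∑ σ, Real.exp (lam * z σ) := by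
          rw [Finset.sum_add_distrib, Finset.mul_sum]
          simp [Fintype.card_perm]
          ring
      _ ≤ (Nat.factorial n : ℝ) * (K - 1) + Real.exp (-K) * ((Nat.factorial n : ℝ) * (t * Real.exp B)) :=
          add_le_add le_rfl (mul_le_mul_of_nonneg_left htot (Real.exp_pos _).le)
      _ = (Nat.factorial n : ℝ) * (K - 1) + (Nat.factorial n : ℝ) * (Real.exp (-K) * (t * Real.exp B)) := by ring
      _ = _ := by rw [hKe]; ring
  have hBe : B = 8 * abar ^ 2 := by
    rw [hB, hlam, ← hqq]; field_simp; ring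
  have hK2 : K ≤ 3 / 2 * Real.log t := by rw [hK, hBe]; linarith
  have h3 : lam * ∑ σ, z σ ≤ lam * ((Nat.factorial n : ℝ) * (3 / 8 * (q * Real.log t))) := by
    calc _ ≤ (Nat.factorial n : ℝ) * (3 / 2 * Real.log t) :=
          hsum.trans (mul_le_mul_of_nonneg_left hK2 hF.le)
      _ = _ := by rw [hlam]; field_simp; ring
  exact le_of_mul_le_mul_left h3 hlam0

lemma period_bound (n m : ℕ) (hm : 0 < m) (hn : 0 < n) (r : Fin n → ℝ)
    (a : Fin n → Fin m → ℝ) (d : Fin m → ℝ)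
    (rbar abar dlb : ℝ) (hdlb : 0 < dlb) (hd : ∀ i, dlb ≤ d i) (hrb : 0 ≤ rbar)
    (hr : ∀ j, |r j| ≤ rbar)
    (hab : 0 ≤ abar) (ha : ∀ j i, |a j i| ≤ abar) (t : ℕ) (ht : t ≤ n) (hmt : m < t)
    (hlog : 16 * abar ^ 2 ≤ Real.log t) :
    (1 / (n : ℝ)) * prefLPval n m r a d n
          - (1 / (t : ℝ)) *
            ((∑ σ : Equiv.Perm (Fin n),
                prefLPval n m (fun j => r (σ j)) (fun j => a (σ j)) d t) /
              (Nat.factorial n : ℝ)) ≤ rbar / dlb * (3 / 8 * (Real.log t / Real.sqrt t)) := by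
  have htR : (0 : ℝ) < t := by exact_mod_cast (by omega : 0 < t)
  have hnR : (0 : ℝ) < n := by exact_mod_cast hn
  have hF : (0 : ℝ) < Nat.factorial n := by exact_mod_cast Nat.factorial_pos n
  set E := ∑ σ : Equiv.Perm (Fin n), prefLPval n m (fun j => r (σ j)) (fun j => a (σ j)) d t with hE
  have hq0 : 0 < Real.sqrt t := Real.sqrt_pos.2 htR
  have hqq : Real.sqrt t ^ 2 = t := Real.sq_sqrt htR.le
  have huniv : (Finset.univ.filter (fun j : Fin n => (j : ℕ) < n)) = Finset.univ := by
    ext j; simp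
  have hmain : prefLPval n m r a d n ≤ n * ((1 / (t : ℝ)) * (E / (Nat.factorial n : ℝ))
      + rbar / dlb * (3 / 8 * (Real.log t / Real.sqrt t))) := by
    apply prefLPval_le n m r a d n (fun i => hdlb.le.trans (hd i))
    intro x hx hf
    rw [huniv] at hf ⊢
    obtain ⟨z, hz0, hzf, hzs⟩ := exp_viol n m hm hn a d abar hab ha t ht hmt hlog x hx hf
    have h1 : ∑ σ : Equiv.Perm (Fin n), (∑ j ∈ Finset.univ.filter (fun j : Fin n => (j : ℕ) < t),
        r (σ j) * x (σ j) - rbar / dlb * z σ) ≤ E := by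
      apply Finset.sum_le_sum
      intro σ _
      exact scale_bound n m (fun j => r (σ j)) (fun j => a (σ j)) d t (by omega) ht rbar dlb hdlb hd
        hrb (fun j => hr _) (fun j => x (σ j)) (fun j => hx _) (z σ) (hz0 σ) (hzf σ)
    rw [Finset.sum_sub_distrib, ← Finset.mul_sum] at h1
    have h2 := sum_perm_prefix n (fun j => r j * x j) t ht
    have h3 := mul_le_mul_of_nonneg_left hzs (by positivity : 0 ≤ rbar / dlb)
    set W := ∑ σ : Equiv.Perm (Fin n), ∑ j ∈ Finset.univ.filter (fun j : Fin n => (j : ℕ) < t),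
        r (σ j) * x (σ j)
    set V := ∑ k, r k * x k
    have h4 : W ≤ E + rbar / dlb * ((Nat.factorial n : ℝ) * (3 / 8 * (Real.sqrt t * Real.log t))) := by
      linarith
    have h5 : (Nat.factorial n : ℝ) * (t * V) ≤ n * (E + rbar / dlb * ((Nat.factorial n : ℝ) * (3 / 8 * (Real.sqrt t * Real.log t)))) := by
      rw [← h2]; exact mul_le_mul_of_nonneg_left h4 hnR.le
    have h6 : Real.log t / Real.sqrt t = Real.sqrt t * Real.log t / t := by
      rw [div_eq_div_iff hq0.ne' htR.ne']; linear_combination (-Real.log t) * hqq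
    rw [h6]
    have h7 : (Nat.factorial n : ℝ) * t * V ≤ (Nat.factorial n : ℝ) * t * (n * (1 / (t : ℝ) * (E / (Nat.factorial n : ℝ))
      + rbar / dlb * (3 / 8 * (Real.sqrt t * Real.log t / t)))) := by
      rw [mul_assoc]
      refine h5.trans (le_of_eq ?_)
      field_simp
    exact le_of_mul_le_mul_left h7 (by positivity)
  have : (1 / (n : ℝ)) * prefLPval n m r a d n ≤ (1 / (t : ℝ)) * (E / (Nat.factorial n : ℝ))
      + rbar / dlb * (3 / 8 * (Real.log t / Real.sqrt t)) := by
    rw [one_div, inv_mul_le_iff₀ hnR]; exact hmain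
  linarith

lemma sum_inv_sqrt (n : ℕ) : ∑ t ∈ Finset.Icc 1 n, 1 / Real.sqrt t ≤ 2 * Real.sqrt n := by
  induction n with
  | zero => simp
  | succ k ih =>
    rw [Finset.sum_Icc_succ_top (by omega)]
    have h1 : 0 < Real.sqrt ((k+1 : ℕ) : ℝ) := Real.sqrt_pos.2 (by positivity)
    have h2 : Real.sqrt ((k+1 : ℕ) : ℝ) ^ 2 = k + 1 := by
      rw [Real.sq_sqrt (by positivity)]; push_cast; ring
    have h3 : Real.sqrt (k : ℝ) ^ 2 = k := Real.sq_sqrt (by positivity)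
    have h4 := Real.sqrt_nonneg (k : ℝ)
    have : 1 / Real.sqrt ((k+1 : ℕ) : ℝ) ≤ 2 * Real.sqrt ((k+1 : ℕ) : ℝ) - 2 * Real.sqrt k := by
      rw [div_le_iff₀ h1]
      nlinarith [sq_nonneg (Real.sqrt ((k+1 : ℕ) : ℝ) - Real.sqrt k)]
    linarith

theorem stmt19 (m n : ℕ) (hm : 0 < m) (hn : 0 < n)
    (r : Fin n → ℝ) (a : Fin n → Fin m → ℝ) (d : Fin m → ℝ)
    (rbar abar dlb dbar : ℝ) (hdlb : 0 < dlb)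
    (hr : ∀ j, |r j| ≤ rbar) (ha : ∀ j i, |a j i| ≤ abar)
    (hd : ∀ i, dlb ≤ d i ∧ d i ≤ dbar)
    (hgen : ∀ p : Fin m → ℝ, {j | r j = ∑ i, a j i * p i}.ncard ≤ m) :
    ∑ t ∈ Finset.Icc 1 n,
        ((1 / (n : ℝ)) * prefLPval n m r a d n
          - (1 / (t : ℝ)) *
            ((∑ σ : Equiv.Perm (Fin n),
                prefLPval n m (fun j => r (σ j)) (fun j => a (σ j)) d t) /
              (Nat.factorial n : ℝ)))
      ≤ m * rbar + (rbar / dlb) * Real.sqrt n * Real.log n + m * rbar * Real.log n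
        + rbar * max (max (16 * abar ^ 2) (Real.exp (16 * abar ^ 2))) (Real.exp 1) := by
  have hnR : (0 : ℝ) < n := by exact_mod_cast hn
  have hF : (0 : ℝ) < Nat.factorial n := by exact_mod_cast Nat.factorial_pos n
  have hrb : 0 ≤ rbar := (abs_nonneg _).trans (hr ⟨0, hn⟩)
  have hab : 0 ≤ abar := (abs_nonneg _).trans (ha ⟨0, hn⟩ ⟨0, hm⟩)
  have hd0 : ∀ i, 0 ≤ d i := fun i => hdlb.le.trans (hd i).1
  have hlogn : 0 ≤ Real.log n := Real.log_nonneg (by exact_mod_cast hn)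
  set T : ℝ := max (max (16 * abar ^ 2) (Real.exp (16 * abar ^ 2))) (Real.exp 1) with hT
  have hT0 : 0 ≤ T := (Real.exp_pos 1).le.trans (le_max_right _ _)
  have hpt : ∀ t ∈ Finset.Icc 1 n, ((1 / (n : ℝ)) * prefLPval n m r a d n
          - (1 / (t : ℝ)) *
            ((∑ σ : Equiv.Perm (Fin n),
                prefLPval n m (fun j => r (σ j)) (fun j => a (σ j)) d t) /
              (Nat.factorial n : ℝ))) ≤
      (if t ≤ m then rbar else 0) + (if t ≤ ⌊T⌋₊ then rbar else 0)
        + rbar / dlb * Real.log n * (3 / 8) * (1 / Real.sqrt t) := by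
    intro t ht
    rw [Finset.mem_Icc] at ht
    have h3 : 0 ≤ rbar / dlb * Real.log n * (3 / 8) * (1 / Real.sqrt t) := by positivity
    have htriv : ((1 / (n : ℝ)) * prefLPval n m r a d n
          - (1 / (t : ℝ)) *
            ((∑ σ : Equiv.Perm (Fin n),
                prefLPval n m (fun j => r (σ j)) (fun j => a (σ j)) d t) /
              (Nat.factorial n : ℝ))) ≤ rbar := by
      have h1 : prefLPval n m r a d n ≤ n * rbar :=
        prefLPval_le n m r a d n hd0 _ fun x hx _ =>
          (abs_le.1 (prefLP_bdd n m r a d n le_rfl rbar hr x hx)).2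
      have h2 : 0 ≤ ∑ σ : Equiv.Perm (Fin n),
                prefLPval n m (fun j => r (σ j)) (fun j => a (σ j)) d t :=
        Finset.sum_nonneg fun σ _ => prefLPval_nonneg n m _ _ d t ht.2 rbar (fun j => hr _) hd0
      have h4 : (1 / (n : ℝ)) * prefLPval n m r a d n ≤ rbar := by
        rw [one_div, inv_mul_le_iff₀ hnR]; exact h1
      have h5 : 0 ≤ (1 / (t : ℝ)) *
            ((∑ σ : Equiv.Perm (Fin n),
                prefLPval n m (fun j => r (σ j)) (fun j => a (σ j)) d t) /
              (Nat.factorial n : ℝ)) := by positivity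
      linarith
    by_cases h1 : t ≤ m
    · have : 0 ≤ (if t ≤ ⌊T⌋₊ then rbar else 0) := by split_ifs <;> simp [hrb]
      rw [if_pos h1]; linarith
    by_cases h2 : t ≤ ⌊T⌋₊
    · rw [if_neg h1, if_pos h2]; linarith
    rw [if_neg h1, if_neg h2]
    have htT : T < t := (Nat.floor_lt hT0).1 (by omega)
    have htR : (0 : ℝ) < t := by exact_mod_cast (by omega : 0 < t)
    have hlog : 16 * abar ^ 2 ≤ Real.log t := by
      rw [Real.le_log_iff_exp_le htR]
      exact ((le_max_right _ _).trans (le_max_left _ _)).trans htT.le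
    refine (period_bound n m hm hn r a d rbar abar dlb hdlb (fun i => (hd i).1) hrb hr hab ha t ht.2
      (by omega) hlog).trans ?_
    have hl : Real.log t ≤ Real.log n := Real.log_le_log htR (by exact_mod_cast ht.2)
    have hs : 0 ≤ rbar / dlb * (3 / 8) * (1 / Real.sqrt t) := by positivity
    calc _ = rbar / dlb * (3 / 8) * (1 / Real.sqrt t) * Real.log t := by ring
      _ ≤ rbar / dlb * (3 / 8) * (1 / Real.sqrt t) * Real.log n := mul_le_mul_of_nonneg_left hl hs
      _ = _ := by ring
  refine (Finset.sum_le_sum hpt).trans ?_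
  rw [Finset.sum_add_distrib, Finset.sum_add_distrib, ← Finset.mul_sum]
  have hcount : ∀ k : ℕ, ∑ t ∈ Finset.Icc 1 n, (if t ≤ k then rbar else 0) ≤ k * rbar := by
    intro k
    rw [← Finset.sum_filter, Finset.sum_const, nsmul_eq_mul]
    apply mul_le_mul_of_nonneg_right _ hrb
    have : (Finset.Icc 1 n).filter (fun t => t ≤ k) ⊆ Finset.Icc 1 k := by
      intro t; simp; omega
    have := Finset.card_le_card this
    rw [Nat.card_Icc] at this
    exact_mod_cast this
  have h1 := hcount m
  have h2 := hcount ⌊T⌋₊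
  have h3 : (⌊T⌋₊ : ℝ) * rbar ≤ T * rbar := mul_le_mul_of_nonneg_right (Nat.floor_le hT0) hrb
  have h4 := mul_le_mul_of_nonneg_left (sum_inv_sqrt n)
    (by positivity : 0 ≤ rbar / dlb * Real.log n * (3 / 8))
  have h5 : 0 ≤ rbar / dlb * Real.sqrt n * Real.log n := by positivity
  have h6 : 0 ≤ m * rbar * Real.log n := by positivity
  nlinarith
end
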